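/- For every integer k ≥ 2 with k ≡ 2 (mod 4), the liminferior as n → ∞ of Φ_k(n) · log log n / n^k equals L(k/2, χ₁)^{−1} · e^{−γ}, where χ₁ is the non-principal Dirichlet character modulo 4 and L(s, χ₁) is its Dirichlet L-function, and γ is the Euler–Mascheroni constant; that is, the minimal order of Φ_k(n) is L(k/2, χ₁)^{−1} e^{−γ} n^k / log log n. -/

import Mathlib

open Filter Real

/-- `Φ_k(n)`: the number of `k`-tuples `(x_1, …, x_k)` over `ℤ/nℤ` such that
`x_1² + ⋯ + x_k²` is a unit modulo `n`. -/
noncomputable def genTotient (k n : ℕ) : ℕ :=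
  Nat.card {x : Fin k → ZMod n // IsUnit (∑ i, x i ^ 2)}


/-- The non-principal Dirichlet character modulo 4, as a `ℂ`-valued Dirichlet character. -/
noncomputable def chiOne : DirichletCharacter ℂ 4 := ZMod.χ₄.ringHomComp (Int.castRingHom ℂ)

/-!
Writing `χ` for `chiOne`, the density `Φ_k(n) / n^k` is `∏_{p ∣ n} g(p)` with
`g(p) = Φ_k(p) / p^k`, and for `k = 2m` counting the zeros of the quadratic form modulo `p` gives
`g(p) = (1 - 1/p) (1 - (χ(p)/p)^m)`. By Mertens' theorem, the Euler product of `χ^m` and, when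
`m = 1`, the analogue of Mertens' theorem for `χ`, the product of the `g(p)` over `p < N` is
asymptotic to `L(m, χ^m)⁻¹ e^{-γ} / log N`. In both Mertens-type theorems partial summation yields
convergence, and the constant is read off from `log L(1 + δ)` as `δ → 0⁺`, the `γ` being
`-∫₀^∞ e^{-u} log u du`. Finally, `n` has at most `log n / log log n` prime factors exceeding
`log n`, which change the product by a factor at least `1 + o(1)`, and the primorials, having all
small primes as factors, attain the bound.
-/

section LocalDensities

theorem card_subtype_comp_eq_mul_card_ker {G H : Type*} [AddGroup G] [AddGroup H] (f : G →+ H)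
    (hf : Function.Surjective f) (P : H → Prop) :
    Nat.card {g // P (f g)} = Nat.card {h // P h} * Nat.card f.ker := by
  rw [← Nat.card_prod]
  exact Nat.card_congr <|
    (Equiv.sigmaSubtypeFiberEquivSubtype f fun _ => Iff.rfl).symm.trans <|
      (Equiv.sigmaCongrRight fun h : {h // P h} => f.fiberEquivKerOfSurjective hf h.1).trans <|
        Equiv.sigmaEquivProd _ _

theorem isUnit_castHom_pow_iff {m e : ℕ} (he : e ≠ 0) (a : ZMod (m ^ e)) :
    IsUnit (ZMod.castHom (dvd_pow_self m he) (ZMod m) a) ↔ IsUnit a := by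
  obtain ⟨b, rfl⟩ := ZMod.intCast_surjective a
  rw [map_intCast, ZMod.coe_int_isUnit_iff_isCoprime, ZMod.coe_int_isUnit_iff_isCoprime,
    Nat.cast_pow, IsCoprime.pow_left_iff (Nat.pos_of_ne_zero he)]

theorem genTotient_pow (k m : ℕ) [NeZero m] {e : ℕ} (he : e ≠ 0) :
    genTotient k (m ^ e) * m ^ k = genTotient k m * (m ^ e) ^ k := by
  let f : ZMod (m ^ e) →+* ZMod m := ZMod.castHom (dvd_pow_self m he) (ZMod m)
  let F : (Fin k → ZMod (m ^ e)) →+ (Fin k → ZMod m) := f.toAddMonoidHom.compLeft (Fin k)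
  have hF : Function.Surjective F := (ZMod.castHom_surjective (dvd_pow_self m he)).comp_left
  have hcount := card_subtype_comp_eq_mul_card_ker F hF
  have hunit : genTotient k (m ^ e) = genTotient k m * Nat.card F.ker := by
    rw [genTotient, genTotient, ← hcount]
    refine Nat.card_congr (Equiv.subtypeEquivRight fun x => ?_)
    rw [← isUnit_castHom_pow_iff he, map_sum]
    simp only [map_pow]
    rfl
  have htotal : (m ^ e) ^ k = m ^ k * Nat.card F.ker := by
    simpa using hcount fun _ => True
  rw [hunit, htotal]
  ring

theorem genTotient_mul (k : ℕ) {m n : ℕ} (h : m.Coprime n) :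
    genTotient k (m * n) = genTotient k m * genTotient k n := by
  let e := ZMod.chineseRemainder h
  let E := (Equiv.arrowCongr (Equiv.refl (Fin k)) e.toEquiv).trans
    (Equiv.arrowProdEquivProdArrow (Fin k) (fun _ => ZMod m) (fun _ => ZMod n))
  have hE : ∀ x, IsUnit (∑ i, x i ^ 2) ↔
      IsUnit (∑ i, (E x).1 i ^ 2) ∧ IsUnit (∑ i, (E x).2 i ^ 2) := by
    intro x
    rw [← MulEquiv.isUnit_map e, Prod.isUnit_iff]
    simp [E, Equiv.arrowProdEquivProdArrow, map_sum, Prod.fst_sum, Prod.snd_sum]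
  rw [genTotient, genTotient, genTotient, ← Nat.card_prod]
  exact Nat.card_congr ((Equiv.subtypeEquiv E hE).trans Equiv.subtypeProdEquivProd)

theorem genTotient_one (k : ℕ) : genTotient k 1 = 1 := by
  have : Nonempty {x : Fin k → ZMod 1 // IsUnit (∑ i, x i ^ 2)} := ⟨0, isUnit_of_subsingleton _⟩
  rw [genTotient, Nat.card_unique]

theorem genTotient_div_pow_eq_prod (k : ℕ) {n : ℕ} (hn : n ≠ 0) :
    (genTotient k n : ℝ) / n ^ k = ∏ p ∈ n.primeFactors, (genTotient k p : ℝ) / p ^ k := by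
  induction n using Nat.recOnPosPrimePosCoprime with
  | zero => exact absurd rfl hn
  | one => simp [genTotient_one]
  | prime_pow p e hp he =>
    have : NeZero p := ⟨hp.ne_zero⟩
    have hp0 : (p : ℝ) ≠ 0 := NeZero.ne _
    rw [Nat.primeFactors_prime_pow he.ne' hp, Finset.prod_singleton,
      div_eq_div_iff (by positivity) (by positivity)]
    exact_mod_cast genTotient_pow k p he.ne'
  | coprime a b ha hb hab iha ihb =>
    rw [genTotient_mul k hab, hab.primeFactors_mul, Finset.prod_union hab.disjoint_primeFactors,
      ← iha (by lia), ← ihb (by lia), Nat.cast_mul, Nat.cast_mul, mul_pow, mul_div_mul_comm]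

/-- The number of representations of `a` as a sum of `k` squares in the finite ring `R`, with
order and signs taken into account. It is an integer so that character sums can be
compared with it directly. -/
def sumSqReps {R : Type*} [CommRing R] [Fintype R] [DecidableEq R] (k : ℕ) (a : R) : ℤ :=
  ∑ x : Fin k → R, if ∑ i, x i ^ 2 = a then 1 else 0

section FiniteRing

variable {R : Type*} [CommRing R] [Fintype R] [DecidableEq R]

theorem sumSqReps_zero (a : R) : sumSqReps 0 a = if a = 0 then 1 else 0 := by
  simp [sumSqReps, eq_comm]

theorem sumSqReps_succ (k : ℕ) (a : R) :
    sumSqReps (k + 1) a = ∑ y : R, sumSqReps k (a - y ^ 2) := by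
  simp only [sumSqReps]
  rw [← (Fin.consEquiv fun _ : Fin (k + 1) => R).sum_comp, Fintype.sum_prod_type]
  simp only [Fin.consEquiv_apply, Fin.sum_univ_succ, Fin.cons_zero, Fin.cons_succ,
    eq_sub_iff_add_eq']

theorem sumSqReps_two (a : R) :
    sumSqReps 2 a = ∑ y : R, ∑ z : R, if a - y ^ 2 - z ^ 2 = 0 then 1 else 0 := by
  simp only [sumSqReps_succ, sumSqReps_zero]

theorem card_mul_sumSqReps_even {ε : ℤ}
    (h : ∀ a : R, sumSqReps 2 a =
      Fintype.card R - ε + if a = 0 then ε * Fintype.card R else 0) (m : ℕ) (a : R) :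
    (Fintype.card R : ℤ) * sumSqReps (2 * m) a =
      (Fintype.card R : ℤ) ^ (2 * m) - ε ^ m * (Fintype.card R : ℤ) ^ m +
        if a = 0 then ε ^ m * (Fintype.card R : ℤ) ^ (m + 1) else 0 := by
  set q := (Fintype.card R : ℤ) with hq
  induction m generalizing a with
  | zero => simp [sumSqReps_zero]
  | succ m ih =>
    have hzero : ∑ y : R, ∑ z : R, (if a - y ^ 2 - z ^ 2 = 0 then ε ^ m * q ^ (m + 1) else 0) =
        ε ^ m * q ^ (m + 1) * sumSqReps 2 a := by
      simp only [sumSqReps_two, Finset.mul_sum, mul_ite, mul_one, mul_zero]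
    have hsucc : sumSqReps (2 * (m + 1)) a =
        ∑ y : R, ∑ z : R, sumSqReps (2 * m) (a - y ^ 2 - z ^ 2) := by
      rw [mul_add_one, sumSqReps_succ]
      simp only [sumSqReps_succ]
    simp only [hsucc, Finset.mul_sum, ih, Finset.sum_add_distrib, hzero, h, Finset.sum_const,
      Finset.card_univ, nsmul_eq_mul, ← hq]
    split_ifs <;> ring

end FiniteRing

section FiniteField

variable {F : Type*} [Field F] [Fintype F] [DecidableEq F]

theorem sum_comp_sq (hF : ringChar F ≠ 2) (g : F → ℤ) :
    ∑ y : F, g (y ^ 2) = ∑ b : F, (quadraticChar F b + 1) * g b := by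
  have hfiber : ∀ b : F, quadraticChar F b + 1 = ∑ y : F, if y ^ 2 = b then 1 else 0 := by
    intro b
    rw [← quadraticChar_card_sqrts hF b, Finset.sum_boole]
    congr 2
    ext
    simp
  simp only [hfiber, Finset.sum_mul, ite_mul, one_mul, zero_mul]
  rw [Finset.sum_comm]
  simp

theorem sum_quadraticChar_mul_quadraticChar_sub (hF : ringChar F ≠ 2) (a : F) :
    ∑ b : F, quadraticChar F b * quadraticChar F (a - b) =
      -quadraticChar F (-1) + if a = 0 then quadraticChar F (-1) * Fintype.card F else 0 := by
  split_ifs with ha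
  · have hterm : ∀ b : F, quadraticChar F b * quadraticChar F (a - b) =
        quadraticChar F (-1) * (1 - if b = 0 then 1 else 0) := by
      intro b
      rcases eq_or_ne b 0 with rfl | hb
      · simp
      · rw [ha, zero_sub, ← neg_one_mul b, map_mul, if_neg hb]
        linear_combination quadraticChar F (-1) * quadraticChar_sq_one hb
    simp only [hterm, ← Finset.mul_sum, Finset.sum_sub_distrib, Finset.sum_ite_eq',
      Finset.sum_const, Finset.card_univ, Finset.mem_univ, if_true, nsmul_eq_mul, mul_one]
    ring
  · have hjacobi := jacobiSum_nontrivial_inv (quadraticChar_ne_one hF)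
    rw [(quadraticChar_isQuadratic F).inv, jacobiSum] at hjacobi
    rw [add_zero, ← hjacobi, ← Equiv.sum_comp (Equiv.mulLeft₀ a ha)]
    refine Finset.sum_congr rfl fun b _ => ?_
    rw [Equiv.mulLeft₀_apply, show a - a * b = a * (1 - b) by ring, map_mul, map_mul]
    linear_combination quadraticChar F b * quadraticChar F (1 - b) * quadraticChar_sq_one ha

theorem sumSqReps_two_of_ringChar_ne_two (hF : ringChar F ≠ 2) (a : F) :
    sumSqReps 2 a = Fintype.card F - quadraticChar F (-1) +
      if a = 0 then quadraticChar F (-1) * Fintype.card F else 0 := by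
  have hone : ∀ b : F, sumSqReps 1 b = quadraticChar F b + 1 := by
    intro b
    rw [sumSqReps_succ, sum_comp_sq hF fun c => sumSqReps 0 (b - c)]
    simp [sumSqReps_zero, sub_eq_zero]
  have hshift : ∑ b : F, quadraticChar F (a - b) = 0 :=
    ((Equiv.subLeft a).sum_comp (quadraticChar F)).trans (quadraticChar_sum_zero hF)
  rw [sumSqReps_succ, sum_comp_sq hF fun c => sumSqReps 1 (a - c)]
  simp only [hone, mul_add, add_mul, mul_one, one_mul, Finset.sum_add_distrib, hshift,
    quadraticChar_sum_zero hF, sum_quadraticChar_mul_quadraticChar_sub hF, Finset.sum_const,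
    Finset.card_univ, nsmul_eq_mul]
  ring

end FiniteField

theorem sumSqReps_two_zmod_two : ∀ a : ZMod 2, sumSqReps 2 a = 2 := by
  decide

theorem sumSqReps_two_zmod (p : ℕ) [hp : Fact p.Prime] (a : ZMod p) :
    sumSqReps 2 a = (p : ℤ) - ZMod.χ₄ p + if a = 0 then ZMod.χ₄ p * (p : ℤ) else 0 := by
  rcases hp.out.eq_two_or_odd with rfl | hodd
  · have hχ : ZMod.χ₄ ((2 : ℕ) : ZMod 4) = 0 := by decide
    simpa [hχ] using sumSqReps_two_zmod_two a
  · have hchar : ringChar (ZMod p) ≠ 2 := by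
      rw [ZMod.ringChar_zmod_n]
      lia
    have h := sumSqReps_two_of_ringChar_ne_two hchar a
    rwa [quadraticChar_neg_one hchar, ZMod.card] at h

theorem genTotient_prime_add_sumSqReps (k p : ℕ) [Fact p.Prime] :
    (genTotient k p : ℤ) + sumSqReps k (0 : ZMod p) = p ^ k := by
  have hcompl := Finset.card_filter_add_card_filter_not
    (s := (Finset.univ : Finset (Fin k → ZMod p))) fun x => ∑ i, x i ^ 2 = 0
  rw [Finset.card_univ, Fintype.card_fun, Fintype.card_fin, ZMod.card, add_comm] at hcompl
  simp only [genTotient, isUnit_iff_ne_zero, sumSqReps, Finset.sum_boole,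
    Nat.card_eq_fintype_card, Fintype.card_subtype]
  exact_mod_cast hcompl

theorem genTotient_prime_div_pow (m : ℕ) {p : ℕ} (hp : p.Prime) :
    (genTotient (2 * m) p : ℝ) / (p : ℝ) ^ (2 * m) =
      (1 - 1 / p) * (1 - (ZMod.χ₄ p / p : ℝ) ^ m) := by
  have := Fact.mk hp
  have hp0 : (p : ℝ) ≠ 0 := NeZero.ne _
  have htotal : (genTotient (2 * m) p : ℝ) + sumSqReps (2 * m) (0 : ZMod p) = p ^ (2 * m) := by
    exact_mod_cast genTotient_prime_add_sumSqReps (2 * m) p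
  have hreps : (p : ℝ) * sumSqReps (2 * m) (0 : ZMod p) =
      p ^ (2 * m) - (ZMod.χ₄ p : ℝ) ^ m * p ^ m + (ZMod.χ₄ p : ℝ) ^ m * p ^ (m + 1) := by
    have h := card_mul_sumSqReps_even (R := ZMod p) (ε := ZMod.χ₄ p)
      (by simpa only [ZMod.card] using sumSqReps_two_zmod p) m 0
    rw [if_pos rfl, ZMod.card] at h
    exact_mod_cast h
  rw [div_pow]
  field_simp
  linear_combination (p : ℝ) ^ m * (p * htotal - hreps)

end LocalDensities

section DirichletTest

variable {E : Type*} [NormedAddCommGroup E] [NormedSpace ℝ E]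

theorem norm_sum_Ico_smul_le_of_antitoneOn {f : ℕ → ℝ} {z : ℕ → E} {b : ℝ} {m : ℕ}
    (hf : AntitoneOn f (Set.Ici m)) (hf0 : ∀ n ≥ m, 0 ≤ f n)
    (hz : ∀ n, ‖∑ i ∈ Finset.range n, z i‖ ≤ b) {M K : ℕ} (hM : m ≤ M) (hMK : M ≤ K) :
    ‖∑ i ∈ Finset.Ico M K, f i • z i‖ ≤ 2 * b * f M := by
  have hb : 0 ≤ b := (norm_nonneg _).trans (hz 0)
  rcases hMK.eq_or_lt with rfl | hlt
  · simpa using mul_nonneg (by positivity) (hf0 M hM)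
  have hterm : ∀ i ∈ Finset.Ico M (K - 1),
      ‖(f (i + 1) - f i) • ∑ j ∈ Finset.range (i + 1), z j‖ ≤ (f i - f (i + 1)) * b := by
    intro i hi
    have hi' : m ≤ i := hM.trans (Finset.mem_Ico.1 hi).1
    have hanti : f (i + 1) ≤ f i :=
      hf hi' (by simpa using hi'.trans (Nat.le_succ i)) (Nat.le_succ i)
    rw [norm_smul, Real.norm_of_nonpos (sub_nonpos.2 hanti), neg_sub]
    exact mul_le_mul_of_nonneg_left (hz _) (sub_nonneg.2 hanti)
  have hend : ∀ n ≥ m, ∀ j, ‖f n • ∑ i ∈ Finset.range j, z i‖ ≤ f n * b := by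
    intro n hn j
    rw [norm_smul, Real.norm_of_nonneg (hf0 n hn)]
    exact mul_le_mul_of_nonneg_left (hz _) (hf0 n hn)
  rw [Finset.sum_Ico_by_parts f z hlt]
  calc _ ≤ f (K - 1) * b + f M * b + ∑ i ∈ Finset.Ico M (K - 1), (f i - f (i + 1)) * b :=
        (norm_sub_le _ _).trans <| add_le_add
          ((norm_sub_le _ _).trans (add_le_add (hend _ (by lia) _) (hend _ hM _)))
          (norm_sum_le_of_le _ hterm)
    _ = 2 * b * f M := by
        rw [← Finset.sum_mul, Finset.sum_Ico_eq_sub _ (by lia), Finset.sum_range_sub',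
          Finset.sum_range_sub']
        ring

theorem exists_norm_sum_range_smul_sub_le_of_antitoneOn [CompleteSpace E] {f : ℕ → ℝ} {z : ℕ → E}
    {b : ℝ} {m : ℕ} (hf : AntitoneOn f (Set.Ici m)) (hf0 : Tendsto f atTop (nhds 0))
    (hz : ∀ n, ‖∑ i ∈ Finset.range n, z i‖ ≤ b) :
    ∃ l : E, Tendsto (fun n => ∑ i ∈ Finset.range n, f i • z i) atTop (nhds l) ∧
      ∀ n ≥ m, ‖l - ∑ i ∈ Finset.range n, f i • z i‖ ≤ 2 * b * f n := by
  have hpos : ∀ n ≥ m, 0 ≤ f n := fun n hn =>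
    le_of_tendsto hf0 <| (eventually_ge_atTop n).mono fun k hk => hf hn (hn.trans hk) hk
  have htail : ∀ n ≥ m, ∀ k ≥ n,
      ‖∑ i ∈ Finset.range k, f i • z i - ∑ i ∈ Finset.range n, f i • z i‖ ≤ 2 * b * f n := by
    intro n hn k hk
    rw [← Finset.sum_Ico_eq_sub _ hk]
    exact norm_sum_Ico_smul_le_of_antitoneOn hf hpos hz hn hk
  have hbound : Tendsto (fun n => 2 * b * f n) atTop (nhds 0) := by
    simpa using hf0.const_mul (2 * b)
  have hcauchy : CauchySeq fun n => ∑ i ∈ Finset.range n, f i • z i := by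
    refine Metric.cauchySeq_iff'.2 fun ε hε => ?_
    obtain ⟨N, hN, hmN⟩ := ((hbound.eventually_lt_const hε).and (eventually_ge_atTop m)).exists
    exact ⟨N, fun n hn => (dist_eq_norm _ _).trans_lt ((htail N hmN n hn).trans_lt hN)⟩
  obtain ⟨l, hl⟩ := cauchySeq_tendsto_of_complete hcauchy
  exact ⟨l, hl, fun n hn => le_of_tendsto (hl.sub_const _).norm <|
    (eventually_ge_atTop n).mono (htail n hn)⟩

end DirichletTest

section AbelianTheorem

open MeasureTheory Topology Asymptotics

theorem integral_exp_neg_mul_log_Ioi :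
    ∫ u in Set.Ioi (0 : ℝ), exp (-u) * log u = -eulerMascheroniConstant := by
  have hGamma : Complex.Gamma =ᶠ[𝓝 1] Complex.GammaIntegral :=
    (Complex.continuous_re.isOpen_preimage _ isOpen_Ioi).eventually_mem
      (show (1 : ℂ) ∈ Complex.re ⁻¹' Set.Ioi 0 by simp) |>.mono
        fun _ hs => Complex.Gamma_eq_integral hs
  have h := ((Complex.hasDerivAt_GammaIntegral (s := 1) (by simp)).congr_of_eventuallyEq
    hGamma).unique Complex.hasDerivAt_Gamma_one
  simp only [sub_self, Complex.cpow_zero, one_mul, ← Complex.ofReal_mul] at h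
  rw [integral_complex_ofReal] at h
  simp only [mul_comm (exp _)]
  exact_mod_cast h

theorem integrableOn_exp_neg_mul_log_Ioi :
    IntegrableOn (fun u : ℝ => exp (-u) * log u) (Set.Ioi 0) := by
  refine Integrable.of_integral_ne_zero ?_
  rw [integral_exp_neg_mul_log_Ioi]
  linarith [one_half_lt_eulerMascheroniConstant]

theorem posLog_div_add_log {u δ : ℝ} (hu : 0 < u) (hδ : 0 < δ) :
    log⁺ (u / δ) + log δ = max (log u) (log δ) := by
  rw [posLog, log_div hu.ne' hδ.ne', max_add, zero_add, sub_add_cancel, max_comm]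

theorem norm_exp_neg_mul_max_log_le {u δ : ℝ} (hδ : 0 < δ) (hδ1 : δ < 1) :
    ‖exp (-u) * max (log u) (log δ)‖ ≤ ‖exp (-u) * log u‖ := by
  rw [norm_mul, norm_mul, norm_eq_abs (max _ _), norm_eq_abs (log u)]
  gcongr ?_ * ?_
  have := log_neg hδ hδ1
  grind

theorem integrableOn_exp_neg_mul_max_log_Ioi {δ : ℝ} (hδ : 0 < δ) (hδ1 : δ < 1) :
    IntegrableOn (fun u : ℝ => exp (-u) * max (log u) (log δ)) (Set.Ioi 0) :=
  Integrable.mono integrableOn_exp_neg_mul_log_Ioi (by fun_prop) <|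
    Eventually.of_forall fun _ => norm_exp_neg_mul_max_log_le hδ hδ1

theorem tendsto_integral_exp_neg_mul_max_log_Ioi :
    Tendsto (fun δ : ℝ => ∫ u in Set.Ioi (0 : ℝ), exp (-u) * max (log u) (log δ)) (𝓝[>] 0)
      (𝓝 (-eulerMascheroniConstant)) := by
  rw [← integral_exp_neg_mul_log_Ioi]
  refine tendsto_integral_filter_of_dominated_convergence (fun u => ‖exp (-u) * log u‖)
    (Eventually.of_forall fun _ => by fun_prop) ?_ integrableOn_exp_neg_mul_log_Ioi.norm ?_
  · filter_upwards [Ioo_mem_nhdsGT one_pos] with δ hδ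
    exact Eventually.of_forall fun _ => norm_exp_neg_mul_max_log_le hδ.1 hδ.2
  · refine Eventually.of_forall fun u => tendsto_const_nhds.congr' ?_
    filter_upwards [tendsto_log_nhdsGT_zero.eventually_le_atBot (log u)] with δ hδ
    rw [max_eq_left hδ]

variable {E : Type*} [NormedAddCommGroup E] [NormedSpace ℝ E]

theorem integrableOn_exp_neg_smul_comp_div_Ioi {D : ℝ → E} (hD : StronglyMeasurable D) {B : ℝ}
    (hB : ∀ t > 0, ‖D t‖ ≤ B) {δ : ℝ} (hδ : 0 < δ) :
    IntegrableOn (fun u : ℝ => exp (-u) • D (u / δ)) (Set.Ioi 0) := by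
  refine (integrableOn_exp_neg_Ioi 0).smul_bdd (C := B) ?_ ?_
  · exact (hD.comp_measurable (by fun_prop)).aestronglyMeasurable
  · filter_upwards [ae_restrict_mem measurableSet_Ioi] with u hu using hB _ (div_pos hu hδ)

theorem tendsto_integral_exp_neg_smul_comp_div [CompleteSpace E] {D : ℝ → E}
    (hD : StronglyMeasurable D) {B : ℝ} (hB : ∀ t > 0, ‖D t‖ ≤ B) {C : E}
    (hC : Tendsto D atTop (𝓝 C)) :
    Tendsto (fun δ : ℝ => ∫ u in Set.Ioi (0 : ℝ), exp (-u) • D (u / δ)) (𝓝[>] 0) (𝓝 C) := by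
  have hlim : ∫ u in Set.Ioi (0 : ℝ), exp (-u) • C = C := by
    rw [integral_smul_const, integral_exp_neg_Ioi_zero, one_smul]
  rw [← hlim]
  refine tendsto_integral_filter_of_dominated_convergence (fun u => exp (-u) * B) ?_ ?_
    ((integrableOn_exp_neg_Ioi 0).mul_const B) ?_
  · filter_upwards [self_mem_nhdsWithin] with δ hδ
    exact (integrableOn_exp_neg_smul_comp_div_Ioi hD hB hδ).aestronglyMeasurable
  · filter_upwards [self_mem_nhdsWithin] with δ hδ
    filter_upwards [ae_restrict_mem measurableSet_Ioi] with u hu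
    rw [norm_smul, norm_of_nonneg (exp_pos _).le]
    exact mul_le_mul_of_nonneg_left (hB _ (div_pos hu hδ)) (exp_pos _).le
  · filter_upwards [ae_restrict_mem measurableSet_Ioi] with u hu
    exact (hC.comp (tendsto_inv_nhdsGT_zero.const_mul_atTop hu)).const_smul _

theorem integral_exp_neg_smul_add_posLog {D : ℝ → ℂ} (hD : StronglyMeasurable D) {B : ℝ}
    (hB : ∀ t > 0, ‖D t‖ ≤ B) (κ : ℂ) {δ : ℝ} (hδ : 0 < δ) (hδ1 : δ < 1) :
    (∫ u in Set.Ioi (0 : ℝ), exp (-u) • (D (u / δ) + κ * log⁺ (u / δ))) + κ * log δ =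
      (∫ u in Set.Ioi (0 : ℝ), exp (-u) • D (u / δ)) +
        κ * (∫ u in Set.Ioi (0 : ℝ), exp (-u) * max (log u) (log δ) : ℝ) := by
  have hsplit : ∀ u ∈ Set.Ioi (0 : ℝ), exp (-u) • (D (u / δ) + κ * log⁺ (u / δ)) =
      exp (-u) • D (u / δ) +
        κ * (exp (-u) * max (log u) (log δ) - exp (-u) * log δ : ℝ) := by
    intro u hu
    rw [← posLog_div_add_log hu hδ]
    simp only [Complex.real_smul, Complex.ofReal_mul, Complex.ofReal_add, Complex.ofReal_sub]
    ring
  have hmax := integrableOn_exp_neg_mul_max_log_Ioi hδ hδ1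
  have hconst := (integrableOn_exp_neg_Ioi 0).mul_const (log δ)
  have hdiff : IntegrableOn
      (fun u => ((exp (-u) * max (log u) (log δ) - exp (-u) * log δ : ℝ) : ℂ)) (Set.Ioi 0) :=
    (hmax.sub hconst).ofReal
  have hexp : ∫ u in Set.Ioi (0 : ℝ), exp (-u) * log δ = log δ := by
    rw [integral_mul_const, integral_exp_neg_Ioi_zero, one_mul]
  rw [setIntegral_congr_fun measurableSet_Ioi hsplit,
    integral_add (integrableOn_exp_neg_smul_comp_div_Ioi hD hB hδ) (hdiff.const_mul κ),
    integral_const_mul, integral_complex_ofReal, integral_sub hmax hconst, hexp]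
  push_cast
  ring

theorem LSeries_eq_integral_exp_neg_smul {f : ℕ → ℂ} (hf0 : f 0 = 0) {r δ : ℝ} (hr : 0 ≤ r)
    (hrδ : r < δ) (hS : LSeriesSummable f δ)
    (hO : (fun n => ∑ k ∈ Finset.range (n + 1), f k) =O[atTop] fun n => (n : ℝ) ^ r) :
    LSeries f δ =
      ∫ u in Set.Ioi (0 : ℝ), exp (-u) • ∑ k ∈ Finset.range (⌊exp (u / δ)⌋₊ + 1), f k := by
  have hδ : 0 < δ := hr.trans_lt hrδ
  have hIcc : ∀ n, ∑ k ∈ Finset.Icc 1 n, f k = ∑ k ∈ Finset.range (n + 1), f k := by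
    intro n
    rw [Finset.range_eq_Ico, Finset.sum_eq_sum_Ico_succ_bot n.succ_pos, hf0, zero_add]
    rfl
  rw [LSeries_eq_mul_integral f hr (by simpa using hrδ) hS (by simpa only [hIcc] using hO)]
  let g : ℝ → ℂ := fun y => exp (-(δ * y)) • ∑ k ∈ Finset.range (⌊exp y⌋₊ + 1), f k
  have hlog : ∫ t in Set.Ioi (1 : ℝ), (∑ k ∈ Finset.Icc 1 ⌊t⌋₊, f k) * (t : ℂ) ^ (-((δ : ℂ) + 1)) =
      ∫ t in Set.Ioi (1 : ℝ), t⁻¹ • g (log t) := by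
    refine setIntegral_congr_fun measurableSet_Ioi fun t ht => ?_
    have ht0 : 0 < t := one_pos.trans ht
    have hpow : (t : ℂ) ^ (-((δ : ℂ) + 1)) = (t⁻¹ * exp (-(δ * log t)) : ℝ) := by
      rw [← Complex.ofReal_one, ← Complex.ofReal_add, ← Complex.ofReal_neg,
        ← Complex.ofReal_cpow ht0.le, rpow_def_of_pos ht0, neg_add, mul_add, exp_add,
        mul_neg_one, exp_neg (log t), exp_log ht0, mul_comm, mul_neg, mul_comm δ]
    simp only [g, hIcc, exp_log ht0, hpow, Complex.real_smul, Complex.ofReal_mul]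
    ring
  have hscale := integral_comp_mul_left_Ioi' g 0 (inv_pos.2 hδ)
  rw [mul_zero] at hscale
  rw [hlog, integral_comp_log_Ioi g one_pos, log_one, ← hscale, Complex.real_smul,
    Complex.ofReal_inv, mul_inv_cancel_left₀ (by exact_mod_cast hδ.ne')]
  simp only [g, inv_mul_eq_div, mul_div_cancel₀ _ hδ.ne']

theorem isBigO_log_log_natCast_add_one {r : ℝ} (hr : 0 < r) :
    (fun n : ℕ => log (log (n + 1 : ℕ))) =O[atTop] fun n : ℕ => (n : ℝ) ^ r := by
  have hcast : Tendsto (fun n : ℕ => ((n + 1 : ℕ) : ℝ)) atTop atTop :=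
    tendsto_natCast_atTop_atTop.comp (tendsto_add_atTop_nat 1)
  have hloglog : (fun n : ℕ => log (log (n + 1 : ℕ))) =O[atTop] fun n : ℕ => log (n + 1 : ℕ) :=
    (isLittleO_log_id_atTop.comp_tendsto (tendsto_log_atTop.comp hcast)).isBigO
  have hlog : (fun n : ℕ => log (n + 1 : ℕ)) =O[atTop] fun n : ℕ => log n := by
    have hsucc : (fun n : ℕ => ((n + 1 : ℕ) : ℝ)) ~[atTop] fun n : ℕ => (n : ℝ) := by
      simpa only [Nat.cast_add, Nat.cast_one] using! IsEquivalent.refl.add_isLittleO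
        ((isLittleO_const_id_atTop (1 : ℝ)).comp_tendsto tendsto_natCast_atTop_atTop)
    exact (hsucc.log tendsto_natCast_atTop_atTop).isBigO
  exact hloglog.trans <| hlog.trans <|
    (isLittleO_log_rpow_atTop hr).isBigO.comp_tendsto tendsto_natCast_atTop_atTop

theorem tendsto_log_log_floor_exp_sub_posLog :
    Tendsto (fun t : ℝ => log (log (⌊exp t⌋₊ + 1 : ℕ)) - log⁺ t) atTop (𝓝 0) := by
  have hfloor : (fun t : ℝ => ((⌊exp t⌋₊ + 1 : ℕ) : ℝ)) ~[atTop] exp := by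
    simpa only [Nat.cast_add, Nat.cast_one] using!
      (isEquivalent_nat_floor.comp_tendsto tendsto_exp_atTop).add_isLittleO
        ((isLittleO_const_id_atTop (1 : ℝ)).comp_tendsto tendsto_exp_atTop)
  have hlog : (fun t : ℝ => log (⌊exp t⌋₊ + 1 : ℕ)) ~[atTop] id := by
    simpa only [log_exp] using! hfloor.log tendsto_exp_atTop
  have hratio := (isEquivalent_iff_tendsto_one (eventually_ne_atTop 0)).1 hlog
  have hlim := (continuousAt_log one_ne_zero).tendsto.comp hratio
  rw [log_one] at hlim
  refine hlim.congr' ?_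
  filter_upwards [eventually_ge_atTop 1] with t ht
  have hpos : 0 < log (⌊exp t⌋₊ + 1 : ℕ) :=
    log_pos (by exact_mod_cast Nat.lt_add_of_pos_left (Nat.floor_pos.2 (one_le_exp (by linarith))))
  rw [Function.comp_apply, Pi.div_apply, log_div hpos.ne' (by linarith),
    posLog_eq_log (by rwa [abs_of_pos (by linarith)])]

section PartialSums

variable {f : ℕ → ℂ} {κ C : ℂ}

theorem tendsto_sum_floor_exp_sub_posLog
    (hf : Tendsto (fun N : ℕ => ∑ n ∈ Finset.range N, f n - κ * log (log N)) atTop (𝓝 C)) :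
    Tendsto (fun t : ℝ => ∑ n ∈ Finset.range (⌊exp t⌋₊ + 1), f n - κ * log⁺ t) atTop (𝓝 C) := by
  have hfloor : Tendsto (fun t : ℝ => ⌊exp t⌋₊ + 1) atTop atTop :=
    (tendsto_add_atTop_nat 1).comp (tendsto_nat_floor_atTop.comp tendsto_exp_atTop)
  have hdiff := (tendsto_log_log_floor_exp_sub_posLog.ofReal).const_mul κ
  simpa [mul_sub] using (hf.comp hfloor).add hdiff

theorem exists_norm_sum_floor_exp_sub_posLog_le
    (hf : Tendsto (fun N : ℕ => ∑ n ∈ Finset.range N, f n - κ * log (log N)) atTop (𝓝 C)) :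
    ∃ B, ∀ t > 0, ‖∑ n ∈ Finset.range (⌊exp t⌋₊ + 1), f n - κ * log⁺ t‖ ≤ B := by
  obtain ⟨T, hT⟩ := eventually_atTop.1 <|
    (tendsto_sum_floor_exp_sub_posLog hf).norm.eventually_le_const (lt_add_one ‖C‖)
  let S := ∑ n ∈ Finset.range (⌊exp T⌋₊ + 1), ‖f n‖ + ‖κ‖ * log⁺ T
  refine ⟨max (‖C‖ + 1) S, fun t ht => ?_⟩
  rcases le_total T t with hTt | htT
  · exact (hT t hTt).trans (le_max_left _ _)
  · refine (norm_sub_le _ _).trans (le_max_of_le_right (add_le_add ?_ ?_))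
    · refine (norm_sum_le _ _).trans (Finset.sum_le_sum_of_subset_of_nonneg ?_ (by simp))
      gcongr
    · rw [norm_mul, Complex.norm_of_nonneg posLog_nonneg]
      gcongr

theorem isBigO_sum_range_succ
    (hf : Tendsto (fun N : ℕ => ∑ n ∈ Finset.range N, f n - κ * log (log N)) atTop (𝓝 C))
    {r : ℝ} (hr : 0 < r) :
    (fun n => ∑ k ∈ Finset.range (n + 1), f k) =O[atTop] fun n : ℕ => (n : ℝ) ^ r := by
  have hone : (fun _ : ℕ => (1 : ℂ)) =O[atTop] fun n : ℕ => (n : ℝ) ^ r :=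
    (isLittleO_const_left.2 <| Or.inr <| tendsto_norm_atTop_atTop.comp <|
      (tendsto_rpow_atTop hr).comp tendsto_natCast_atTop_atTop).isBigO
  have hlog : (fun n : ℕ => κ * log (log (n + 1 : ℕ))) =O[atTop] fun n : ℕ => (n : ℝ) ^ r :=
    (Complex.isBigO_ofReal_left.2 (isBigO_log_log_natCast_add_one hr)).const_mul_left κ
  have hdiff := ((hf.comp (tendsto_add_atTop_nat 1)).isBigO_one ℂ).trans hone
  simpa using! hdiff.add hlog

theorem tendsto_LSeries_add_mul_log (hf0 : f 0 = 0)
    (hS : ∀ δ : ℝ, 0 < δ → LSeriesSummable f δ)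
    (hf : Tendsto (fun N : ℕ => ∑ n ∈ Finset.range N, f n - κ * log (log N)) atTop (𝓝 C)) :
    Tendsto (fun δ : ℝ => LSeries f δ + κ * log δ) (𝓝[>] 0)
      (𝓝 (C - κ * eulerMascheroniConstant)) := by
  let D : ℝ → ℂ := fun t => ∑ n ∈ Finset.range (⌊exp t⌋₊ + 1), f n - κ * log⁺ t
  obtain ⟨B, hB⟩ := exists_norm_sum_floor_exp_sub_posLog_le hf
  have hD : StronglyMeasurable D := by
    have hsum : Measurable fun t : ℝ => ∑ n ∈ Finset.range (⌊exp t⌋₊ + 1), f n :=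
      (measurable_of_countable fun m => ∑ n ∈ Finset.range (m + 1), f n).comp
        (Nat.measurable_floor.comp measurable_exp)
    have hpos : Measurable posLog := by
      unfold posLog
      fun_prop
    exact (hsum.sub (by fun_prop)).stronglyMeasurable
  have hmax := tendsto_integral_exp_neg_mul_max_log_Ioi.ofReal
  have hlim := (tendsto_integral_exp_neg_smul_comp_div hD hB
    (tendsto_sum_floor_exp_sub_posLog hf)).add (hmax.const_mul κ)
  rw [Complex.ofReal_neg, mul_neg, ← sub_eq_add_neg] at hlim
  refine hlim.congr' ?_
  filter_upwards [Ioo_mem_nhdsGT one_pos] with δ ⟨hδ, hδ1⟩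
  rw [LSeries_eq_integral_exp_neg_smul hf0 (half_pos hδ).le (half_lt_self hδ) (hS δ hδ)
    (isBigO_sum_range_succ hf (half_pos hδ)),
    ← integral_exp_neg_smul_add_posLog hD hB κ hδ hδ1]
  simp only [D, sub_add_cancel]

end PartialSums

end AbelianTheorem

section MertensEstimates

open Topology

open scoped ArithmeticFunction.vonMangoldt

theorem log_natCast_succ_sub_log_nonneg (n : ℕ) : 0 ≤ log (n + 1 : ℕ) - log n := by
  rcases n.eq_zero_or_pos with rfl | hn
  · simp
  · exact sub_nonneg.2 (log_le_log (by exact_mod_cast hn) (by exact_mod_cast n.le_succ))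

theorem log_natCast_succ_sub_log_le_one (n : ℕ) : log (n + 1 : ℕ) - log n ≤ 1 := by
  rcases n.eq_zero_or_pos with rfl | hn
  · simp
  have hn' : (1 : ℝ) ≤ n := by exact_mod_cast hn
  have hratio : ((n + 1 : ℕ) : ℝ) / n - 1 ≤ 1 := by
    rw [sub_le_iff_le_add, div_le_iff₀ (by linarith)]
    push_cast
    linarith
  rw [← log_div (by positivity) (by positivity)]
  exact (log_le_sub_one_of_pos (by positivity)).trans hratio

theorem log_sub_log_le_div {a b : ℝ} (ha : 0 < a) (hb : 0 < b) : log b - log a ≤ (b - a) / a := by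
  rw [← log_div hb.ne' ha.ne', sub_div, div_self ha.ne']
  exact log_le_sub_one_of_pos (by positivity)

theorem exists_tendsto_sum_log_sub_log_div_log_sub_log_log :
    ∃ C : ℝ, Tendsto (fun N : ℕ => ∑ n ∈ Finset.range N, (log (n + 1 : ℕ) - log n) / log n
      - log (log N)) atTop (𝓝 C) := by
  let d : ℕ → ℝ := fun n =>
    (log (n + 1 : ℕ) - log n) / log n - (log (log (n + 1 : ℕ)) - log (log n))
  have hlog : ∀ n : ℕ, 0 < log (n + 2 : ℕ) := fun n => log_pos (by exact_mod_cast (by omega))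
  have hd_nonneg : ∀ n, 0 ≤ d (n + 2) := fun n =>
    sub_nonneg.2 (log_sub_log_le_div (hlog n) (hlog (n + 1)))
  have hd_le : ∀ n : ℕ, d (n + 2) ≤ (log (n + 2 : ℕ))⁻¹ - (log (n + 1 + 2 : ℕ))⁻¹ := by
    intro n
    have hstep := log_sub_log_le_div (hlog (n + 1)) (hlog n)
    have hle := log_natCast_succ_sub_log_le_one (n + 2)
    have hnonneg := log_natCast_succ_sub_log_nonneg (n + 2)
    have ha := hlog n
    have hb := hlog (n + 1)
    rw [show n + 2 + 1 = n + 1 + 2 by ring] at hle hnonneg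
    simp only [d, show n + 2 + 1 = n + 1 + 2 by ring]
    set a := log (n + 2 : ℕ)
    set b := log (n + 1 + 2 : ℕ)
    have hinv : 0 ≤ a⁻¹ - b⁻¹ := sub_nonneg.2 (inv_anti₀ ha (sub_nonneg.1 hnonneg))
    calc (b - a) / a - (log b - log a) ≤ (b - a) / a + (a - b) / b := by linarith
      _ = (b - a) * (a⁻¹ - b⁻¹) := by ring
      _ ≤ a⁻¹ - b⁻¹ := mul_le_of_le_one_left hinv hle
  have hsummable : Summable d := by
    refine (summable_nat_add_iff 2).1 <| summable_of_sum_range_le (c := (log (0 + 2 : ℕ))⁻¹)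
      hd_nonneg fun N => (Finset.sum_le_sum fun n _ => hd_le n).trans ?_
    rw [Finset.sum_range_sub' fun n : ℕ => (log (n + 2 : ℕ))⁻¹]
    exact sub_le_self _ (inv_nonneg.2 (hlog N).le)
  refine ⟨_, hsummable.hasSum.tendsto_sum_nat.congr fun N => ?_⟩
  rw [Finset.sum_sub_distrib, Finset.sum_range_sub fun n : ℕ => log (log n)]
  simp only [Nat.cast_zero, log_zero, sub_zero]

theorem exists_tendsto_sum_div_log {z : ℕ → ℂ} {κ : ℂ} {b : ℝ}
    (hz : ∀ N : ℕ, ‖∑ n ∈ Finset.range N, z n - κ * log N‖ ≤ b) :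
    ∃ C, Tendsto (fun N : ℕ => ∑ n ∈ Finset.range N, z n / log n - κ * log (log N))
      atTop (𝓝 C) := by
  have hanti : AntitoneOn (fun n : ℕ => (log n)⁻¹) (Set.Ici 2) := fun m hm n _ hmn =>
    inv_anti₀ (log_pos (by exact_mod_cast hm)) <|
      log_le_log (by exact_mod_cast zero_lt_two.trans_le hm) (by exact_mod_cast hmn)
  have hlim : Tendsto (fun n : ℕ => (log n)⁻¹) atTop (𝓝 0) :=
    (tendsto_log_atTop.comp tendsto_natCast_atTop_atTop).inv_tendsto_atTop
  have hbdd : ∀ N : ℕ,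
      ‖∑ n ∈ Finset.range N, (z n - κ * ((log (n + 1 : ℕ) - log n : ℝ) : ℂ))‖ ≤ b := by
    intro N
    rw [Finset.sum_sub_distrib, ← Finset.mul_sum, ← Complex.ofReal_sum,
      Finset.sum_range_sub fun n : ℕ => log n]
    simpa using hz N
  obtain ⟨l, hl, -⟩ := exists_norm_sum_range_smul_sub_le_of_antitoneOn hanti hlim hbdd
  obtain ⟨C, hC⟩ := exists_tendsto_sum_log_sub_log_div_log_sub_log_log
  refine ⟨l + κ * C, (hl.add <| ((Complex.continuous_ofReal.tendsto C).comp hC).const_mul κ).congr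
    fun N => ?_⟩
  simp only [Function.comp_apply, Complex.ofReal_sub, Complex.ofReal_sum, mul_sub, Finset.mul_sum,
    ← add_sub_assoc, ← Finset.sum_add_distrib]
  congr 1
  refine Finset.sum_congr rfl fun n _ => ?_
  rw [Complex.real_smul]
  push_cast
  ring

theorem sum_range_succ_eq_sum_Ioc {M : Type*} [AddCommMonoid M] {f : ℕ → M} (hf : f 0 = 0) (N : ℕ) :
    ∑ n ∈ Finset.range (N + 1), f n = ∑ n ∈ Finset.Ioc 0 N, f n := by
  rw [Finset.sum_range_succ', hf, add_zero, Finset.range_eq_Ico, Finset.sum_Ico_add' f 0 N 1]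
  rfl

theorem sum_vonMangoldt_le (N : ℕ) : ∑ n ∈ Finset.Ioc 0 N, Λ n ≤ (log 4 + 4) * N := by
  simpa only [Chebyshev.psi, Nat.floor_natCast] using
    Chebyshev.psi_le_const_mul_self N.cast_nonneg

theorem natCast_div_lt_floor_add_one (N n : ℕ) : (N : ℝ) / n < ((N / n : ℕ) : ℝ) + 1 := by
  rw [← Nat.floor_div_eq_div (K := ℝ)]
  exact Nat.lt_floor_add_one _

theorem sum_log_eq_log_factorial (N : ℕ) :
    ∑ n ∈ Finset.Ioc 0 N, log n = log N.factorial := by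
  rw [← Finset.prod_Ico_id_eq_factorial, Nat.cast_prod, log_prod]
  · rfl
  · intro n hn
    have := (Finset.mem_Ico.1 hn).1
    positivity

theorem sum_vonMangoldt_mul_div (N : ℕ) :
    ∑ n ∈ Finset.Ioc 0 N, Λ n * ((N / n : ℕ) : ℝ) = log N.factorial := by
  rw [← ArithmeticFunction.sum_Ioc_mul_zeta_eq_sum, ArithmeticFunction.vonMangoldt_mul_zeta,
    ← sum_log_eq_log_factorial]
  rfl

theorem abs_sum_vonMangoldt_div_sub_log_le {N : ℕ} (hN : N ≠ 0) :
    |∑ n ∈ Finset.Ioc 0 N, Λ n / n - log N| ≤ log 4 + 4 := by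
  have hN0 : (0 : ℝ) < N := by positivity
  have hupper : log N.factorial ≤ N * ∑ n ∈ Finset.Ioc 0 N, Λ n / n := by
    rw [← sum_vonMangoldt_mul_div, Finset.mul_sum]
    refine Finset.sum_le_sum fun n _ => ?_
    rw [mul_div_left_comm]
    exact mul_le_mul_of_nonneg_left Nat.cast_div_le ArithmeticFunction.vonMangoldt_nonneg
  have hlower : N * ∑ n ∈ Finset.Ioc 0 N, Λ n / n ≤ log N.factorial + (log 4 + 4) * N := by
    refine le_trans ?_ (add_le_add_right (sum_vonMangoldt_le N) _)
    rw [← sum_vonMangoldt_mul_div, Finset.mul_sum, ← Finset.sum_add_distrib]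
    refine Finset.sum_le_sum fun n _ => ?_
    rw [mul_div_left_comm, ← mul_add_one]
    exact mul_le_mul_of_nonneg_left (natCast_div_lt_floor_add_one N n).le
      ArithmeticFunction.vonMangoldt_nonneg
  have hfactorial_le : log N.factorial ≤ N * log N := by
    rw [← log_pow]
    exact log_le_log (by positivity) (by exact_mod_cast Nat.factorial_le_pow N)
  have hle_factorial : N * log N - N ≤ log N.factorial := by
    have hstirling := Stirling.le_log_factorial_stirling hN
    have hlogN : 0 ≤ log N := log_nonneg (by exact_mod_cast Nat.one_le_iff_ne_zero.2 hN)
    have hlog2π : 0 ≤ log (2 * π) := log_nonneg (by linarith [pi_gt_three])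
    linarith
  have hlog4 : 0 ≤ log 4 := log_nonneg (by norm_num)
  rw [abs_le, neg_le_sub_iff_le_add, sub_le_iff_le_add]
  constructor <;> refine le_of_mul_le_mul_left ?_ hN0 <;> nlinarith

theorem exists_norm_sum_vonMangoldt_div_sub_log_le :
    ∃ b : ℝ, ∀ N : ℕ, ‖∑ n ∈ Finset.range N, Λ n / n - log N‖ ≤ b := by
  refine ⟨log 4 + 4 + 1, fun N => ?_⟩
  rcases N with _ | N
  · simpa using add_nonneg (add_nonneg (log_nonneg (by norm_num)) zero_le_four) zero_le_one
  rcases eq_or_ne N 0 with rfl | hN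
  · simpa using add_nonneg (add_nonneg (log_nonneg (by norm_num)) zero_le_four) zero_le_one
  have hmertens := abs_le.1 (abs_sum_vonMangoldt_div_sub_log_le hN)
  have hstep := log_natCast_succ_sub_log_le_one N
  have hstep' := log_natCast_succ_sub_log_nonneg N
  rw [sum_range_succ_eq_sum_Ioc (by simp), Real.norm_eq_abs, abs_le]
  constructor <;> linarith

theorem sum_range_natCast_zmod_eq_sum {M : Type*} [AddCommMonoid M] {q : ℕ} [NeZero q]
    (f : ZMod q → M) : ∑ n ∈ Finset.range q, f n = ∑ a, f a :=
  Finset.sum_nbij' (fun n => (n : ZMod q)) ZMod.val (by simp) (by simp [ZMod.val_lt])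
    (fun n hn => ZMod.val_cast_of_lt (Finset.mem_range.1 hn)) (by simp) (by simp)

theorem sum_mul_log_div_eq {q : ℕ} (χ : DirichletCharacter ℂ q) (N : ℕ) :
    ∑ n ∈ Finset.Ioc 0 N, χ n * log n / n =
      ∑ n ∈ Finset.Ioc 0 N, χ n * Λ n / n * ∑ m ∈ Finset.Ioc 0 (N / n), χ m / m := by
  let f : ArithmeticFunction ℂ := ⟨fun n => χ n * Λ n / n, by simp⟩
  let g : ArithmeticFunction ℂ := ⟨fun n => χ n / n, by simp⟩
  have hconv : ∀ n, (f * g) n = χ n * log n / n := by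
    intro n
    have hterm : ∀ x ∈ n.divisorsAntidiagonal, f x.1 * g x.2 = χ n / n * Λ x.1 := by
      intro x hx
      change χ x.1 * Λ x.1 / x.1 * (χ x.2 / x.2) = _
      rw [← (Nat.mem_divisorsAntidiagonal.1 hx).1, Nat.cast_mul, Nat.cast_mul, map_mul]
      ring
    rw [ArithmeticFunction.mul_apply, Finset.sum_congr rfl hterm, ← Finset.mul_sum,
      Nat.sum_divisorsAntidiagonal fun d _ => (Λ d : ℂ), ← Complex.ofReal_sum,
      ArithmeticFunction.vonMangoldt_sum]
    ring
  rw [← Finset.sum_congr rfl fun n _ => hconv n]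
  exact ArithmeticFunction.sum_Ioc_mul_eq_sum_sum f g N

variable {q : ℕ} [NeZero q] {χ : DirichletCharacter ℂ q}

theorem norm_sum_range_dirichletCharacter_le (hχ : χ ≠ 1) (N : ℕ) :
    ‖∑ n ∈ Finset.range N, χ n‖ ≤ q := by
  have hperiods : ∀ a : ℕ, ∑ n ∈ Finset.range (q * a), χ n = 0 := by
    intro a
    induction a with
    | zero => simp
    | succ a ih =>
      simp [mul_add_one, Finset.sum_range_add, ih, sum_range_natCast_zmod_eq_sum,
        MulChar.sum_eq_zero_of_ne_one hχ]
  calc ‖∑ n ∈ Finset.range N, χ n‖ = ‖∑ n ∈ Finset.range (N % q), χ n‖ := by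
        conv_lhs => rw [← Nat.div_add_mod N q, Finset.sum_range_add, hperiods]
        simp
    _ ≤ (Finset.range (N % q)).card • 1 :=
        (norm_sum_le _ _).trans (Finset.sum_le_card_nsmul _ _ _ fun n _ => χ.norm_le_one _)
    _ ≤ q := by
        simpa using (Nat.mod_lt N (NeZero.pos q)).le

theorem LSeries_term_div_natCast (f : ℕ → ℂ) (s : ℂ) :
    LSeries.term (fun n => f n / n) s = LSeries.term f (1 + s) := by
  ext n
  rcases eq_or_ne n 0 with rfl | hn
  · simp
  · have hn' : (n : ℂ) ≠ 0 := Nat.cast_ne_zero.2 hn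
    rw [LSeries.term_of_ne_zero hn, LSeries.term_of_ne_zero hn, Complex.cpow_add _ _ hn',
      Complex.cpow_one, div_div]

theorem tendsto_LFunction_one_add (hχ : χ ≠ 1) :
    Tendsto (fun δ : ℝ => χ.LFunction (1 + δ)) (𝓝[>] 0) (𝓝 (χ.LFunction 1)) := by
  have hcont : Continuous fun δ : ℝ => χ.LFunction (1 + δ) :=
    (DirichletCharacter.differentiable_LFunction hχ).continuous.comp (by fun_prop)
  simpa using (hcont.tendsto 0).mono_left nhdsWithin_le_nhds

theorem norm_LFunction_one_sub_sum_le (hχ : χ ≠ 1) {N : ℕ} (hN : 1 ≤ N) :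
    ‖χ.LFunction 1 - ∑ n ∈ Finset.range N, χ n / n‖ ≤ 2 * q / N := by
  have hanti : AntitoneOn (fun n : ℕ => (n : ℝ)⁻¹) (Set.Ici 1) := fun m hm n _ hmn =>
    inv_anti₀ (by exact_mod_cast Nat.lt_of_lt_of_le one_pos hm) (by exact_mod_cast hmn)
  obtain ⟨l, hl, htail⟩ := exists_norm_sum_range_smul_sub_le_of_antitoneOn hanti
    tendsto_inv_atTop_nhds_zero_nat (norm_sum_range_dirichletCharacter_le hχ)
  have hterm : ∀ n : ℕ, (n : ℝ)⁻¹ • χ n = χ n / n := fun n => by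
    rw [Complex.real_smul, Complex.ofReal_inv, Complex.ofReal_natCast, inv_mul_eq_div]
  simp only [hterm] at hl htail
  have hre : ∀ δ : ℝ, 0 < δ → 1 < (1 + δ : ℂ).re := fun δ hδ => by simpa using hδ
  have habel : Tendsto (fun δ : ℝ => LSeries (fun n => χ n / n) δ) (𝓝[>] 0) (𝓝 l) := by
    have h := tendsto_LSeries_add_mul_log (f := fun n => χ n / n) (κ := 0) (C := l) (by simp)
      (fun δ hδ => by
        rw [LSeriesSummable, LSeries_term_div_natCast]
        exact χ.LSeriesSummable_of_one_lt_re (hre δ hδ))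
      (by simpa using hl)
    simpa using h
  have hL : χ.LFunction 1 = l := by
    refine tendsto_nhds_unique (tendsto_LFunction_one_add hχ) (habel.congr' ?_)
    filter_upwards [self_mem_nhdsWithin] with δ hδ
    rw [χ.LFunction_eq_LSeries (hre δ hδ), LSeries, LSeries_term_div_natCast, LSeries]
  rw [hL]
  simpa only [div_eq_mul_inv] using htail N hN

theorem exists_norm_sum_mul_log_div_le (hχ : χ ≠ 1) :
    ∃ b : ℝ, ∀ N : ℕ, ‖∑ n ∈ Finset.range N, χ n * log n / n‖ ≤ b := by
  have hanti : AntitoneOn (fun n : ℕ => log n / n) (Set.Ici 3) := fun m hm n hn hmn =>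
    log_div_self_antitoneOn (exp_one_lt_three.le.trans (by exact_mod_cast hm))
      (exp_one_lt_three.le.trans (by exact_mod_cast hn)) (by exact_mod_cast hmn)
  have hlim : Tendsto (fun n : ℕ => log n / n) atTop (𝓝 0) :=
    isLittleO_log_id_atTop.tendsto_div_nhds_zero.comp tendsto_natCast_atTop_atTop
  obtain ⟨l, hl, -⟩ := exists_norm_sum_range_smul_sub_le_of_antitoneOn hanti hlim
    (norm_sum_range_dirichletCharacter_le hχ)
  obtain ⟨b, hb⟩ := (Metric.isBounded_range_of_tendsto _ hl).exists_norm_le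
  refine ⟨b, fun N => (congrArg norm <| Finset.sum_congr rfl fun n _ => ?_).trans_le
    (hb _ ⟨N, rfl⟩)⟩
  rw [Complex.real_smul]
  push_cast
  ring

theorem norm_LFunction_one_mul_sum_sub_le (hχ : χ ≠ 1) (N : ℕ) :
    ‖χ.LFunction 1 * ∑ n ∈ Finset.Ioc 0 N, χ n * Λ n / n
      - ∑ n ∈ Finset.Ioc 0 N, χ n * log n / n‖ ≤ 2 * q * (log 4 + 4) := by
  rcases N.eq_zero_or_pos with rfl | hN
  · have : 0 ≤ log 4 := log_nonneg (by norm_num)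
    simpa using by positivity
  have : (0 : ℝ) < N := by exact_mod_cast hN
  rw [sum_mul_log_div_eq, Finset.mul_sum, ← Finset.sum_sub_distrib]
  have hterm : ∀ n ∈ Finset.Ioc 0 N, ‖χ.LFunction 1 * (χ n * Λ n / n)
      - χ n * Λ n / n * ∑ m ∈ Finset.Ioc 0 (N / n), χ m / m‖ ≤ 2 * q / N * Λ n := by
    intro n hn
    have hn0 : (0 : ℝ) < n := by exact_mod_cast (Finset.mem_Ioc.1 hn).1
    have htail : ‖χ.LFunction 1 - ∑ m ∈ Finset.Ioc 0 (N / n), χ m / m‖ ≤ 2 * q * (n / N) := by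
      rw [← sum_range_succ_eq_sum_Ioc (by simp)]
      refine (norm_LFunction_one_sub_sum_le hχ le_add_self).trans ?_
      rw [div_eq_mul_inv, ← inv_div (N : ℝ), Nat.cast_add_one]
      exact mul_le_mul_of_nonneg_left
        (inv_anti₀ (by positivity) (natCast_div_lt_floor_add_one N n).le) (by positivity)
    have hΛ : ‖(Λ n : ℂ)‖ = Λ n :=
      Complex.norm_of_nonneg ArithmeticFunction.vonMangoldt_nonneg
    calc _ = ‖χ n‖ * Λ n / n * ‖χ.LFunction 1 - ∑ m ∈ Finset.Ioc 0 (N / n), χ m / m‖ := by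
          rw [mul_comm (χ.LFunction 1), ← mul_sub, norm_mul, norm_div, norm_mul, hΛ,
            Complex.norm_natCast]
      _ ≤ 1 * Λ n / n * (2 * q * (n / N)) := by
          have : 0 ≤ Λ n := ArithmeticFunction.vonMangoldt_nonneg
          gcongr
          exact χ.norm_le_one _
      _ = 2 * q / N * Λ n := by field_simp
  calc _ ≤ ∑ n ∈ Finset.Ioc 0 N, 2 * q / N * Λ n := norm_sum_le_of_le _ hterm
    _ = 2 * q / N * ∑ n ∈ Finset.Ioc 0 N, Λ n := (Finset.mul_sum _ _ _).symm
    _ ≤ 2 * q / N * ((log 4 + 4) * N) := by gcongr; exact sum_vonMangoldt_le N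
    _ = 2 * q * (log 4 + 4) := by field_simp

theorem exists_norm_sum_mul_vonMangoldt_div_le (hχ : χ ≠ 1) :
    ∃ b : ℝ, ∀ N : ℕ, ‖∑ n ∈ Finset.range N, χ n * Λ n / n‖ ≤ b := by
  obtain ⟨B, hB⟩ := exists_norm_sum_mul_log_div_le hχ
  have hL : 0 < ‖χ.LFunction 1‖ :=
    norm_pos_iff.2 (DirichletCharacter.LFunction_apply_one_ne_zero hχ)
  refine ⟨(2 * q * (log 4 + 4) + B) / ‖χ.LFunction 1‖, fun N => ?_⟩
  rw [le_div_iff₀' hL, ← norm_mul]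
  rcases N with _ | N
  · have : 0 ≤ log 4 := log_nonneg (by norm_num)
    have : 0 ≤ B := (norm_nonneg _).trans (hB 0)
    simpa using by positivity
  rw [sum_range_succ_eq_sum_Ioc (by simp)]
  set S := ∑ n ∈ Finset.Ioc 0 N, χ n * Λ n / n
  set T := ∑ n ∈ Finset.Ioc 0 N, χ n * log n / n
  have hT : ‖T‖ ≤ B := by
    have h := hB (N + 1)
    rwa [sum_range_succ_eq_sum_Ioc (by simp)] at h
  calc ‖χ.LFunction 1 * S‖ ≤ ‖χ.LFunction 1 * S - T‖ + ‖T‖ := norm_le_norm_sub_add _ _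
    _ ≤ 2 * q * (log 4 + 4) + B := add_le_add (norm_LFunction_one_mul_sum_sub_le hχ N) hT

end MertensEstimates

section MertensProducts

open Topology

open scoped ArithmeticFunction.vonMangoldt

theorem summable_nonprime_vonMangoldt_div :
    Summable fun n : ℕ => (if n.Prime then 0 else Λ n) / n := by
  simpa [ArithmeticFunction.vonMangoldt.residueClass, Subsingleton.elim _ (0 : ZMod 1)] using
    ArithmeticFunction.vonMangoldt.summable_residueClass_non_primes_div (q := 1) 0

theorem hasSum_primes_pow_of_support_subset {E : Type*} [AddCommMonoid E] [TopologicalSpace E]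
    {f : ℕ → E} {a : E} (hf : HasSum f a) (hsupport : Function.support f ⊆ {n | IsPrimePow n}) :
    HasSum (fun pk : Nat.Primes × ℕ => f ((pk.1 : ℕ) ^ (pk.2 + 1))) a :=
  Nat.Primes.prodNatEquiv.hasSum_iff.2 ((hasSum_subtype_iff_of_support_subset hsupport).2 hf)

variable {q : ℕ} (χ : DirichletCharacter ℂ q)

theorem summable_nonprime_mul_vonMangoldt_div_log_div :
    Summable fun n : ℕ => if n.Prime then 0 else χ n * Λ n / log n / n := by
  refine Summable.of_norm_bounded
    (summable_nonprime_vonMangoldt_div.mul_left (log 2)⁻¹) fun n => ?_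
  split_ifs
  · simp
  rcases lt_or_ge n 2 with hn | hn
  · interval_cases n <;> simp
  have hlog2 : 0 < log 2 := log_pos one_lt_two
  have hlog : log 2 ≤ log n := log_le_log two_pos (by exact_mod_cast hn)
  have hΛ : 0 ≤ Λ n := ArithmeticFunction.vonMangoldt_nonneg
  rw [norm_div, norm_div, norm_mul, Complex.norm_of_nonneg hΛ,
    Complex.norm_of_nonneg (hlog2.le.trans hlog), Complex.norm_natCast, ← mul_div_assoc,
    inv_mul_eq_div]
  gcongr
  exact mul_le_of_le_one_left hΛ (χ.norm_le_one _)

theorem norm_apply_div_natCast_lt_one {p : ℕ} (hp : 1 < p) : ‖χ p / p‖ < 1 := by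
  rw [norm_div, Complex.norm_natCast, div_lt_one (by positivity)]
  exact (χ.norm_le_one _).trans_lt (by exact_mod_cast hp)

theorem hasSum_neg_log_one_sub_sub :
    HasSum (fun p : Nat.Primes => -Complex.log (1 - χ p / (p : ℕ)) - χ p / (p : ℕ))
      (∑' n : ℕ, if n.Prime then 0 else χ n * Λ n / log n / n) := by
  let f : ℕ → ℂ := fun n => if n.Prime then 0 else χ n * Λ n / log n / n
  have hsupport : Function.support f ⊆ {n | IsPrimePow n} := by
    intro n hn
    contrapose! hn
    simp [f, ArithmeticFunction.vonMangoldt_eq_zero_iff.2 hn]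
  refine (hasSum_primes_pow_of_support_subset
    (summable_nonprime_mul_vonMangoldt_div_log_div χ).hasSum hsupport).prod_fiberwise fun p => ?_
  have hp : (p : ℕ).Prime := p.2
  have hseries := (Complex.hasSum_taylorSeries_neg_log'
    (norm_apply_div_natCast_lt_one χ hp.one_lt)).sub (hasSum_ite_eq 0 (χ p / (p : ℕ)))
  refine hseries.congr_fun fun k => ?_
  rcases Nat.eq_zero_or_pos k with rfl | hk
  · simp [hp]
  have hnot : ¬((p : ℕ) ^ (k + 1)).Prime := Nat.Prime.not_prime_pow (by omega)
  have hlog : (log (p : ℕ) : ℂ) ≠ 0 := by exact_mod_cast (log_pos (by exact_mod_cast hp.one_lt)).ne'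
  have hp0 : ((p : ℕ) : ℂ) ≠ 0 := by exact_mod_cast hp.ne_zero
  simp only [if_neg hnot, if_neg hk.ne', sub_zero, Nat.cast_pow, map_pow, log_pow,
    ArithmeticFunction.vonMangoldt_apply_pow (Nat.add_one_ne_zero k),
    ArithmeticFunction.vonMangoldt_apply_prime hp, div_pow, Complex.ofReal_mul,
    Complex.ofReal_natCast, Complex.ofReal_add, Complex.ofReal_one, Nat.cast_add, Nat.cast_one]
  field_simp

theorem tendsto_sum_neg_log_one_sub_sub_sum :
    Tendsto (fun N : ℕ => ∑ p ∈ N.primesBelow, -Complex.log (1 - χ p / p)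
      - ∑ n ∈ Finset.range N, χ n * Λ n / log n / n) atTop (𝓝 0) := by
  have hprimes := (hasSum_subtype_iff_indicator (s := {p : ℕ | p.Prime})
    (f := fun p : ℕ => -Complex.log (1 - χ p / p) - χ p / p)).1 (hasSum_neg_log_one_sub_sub χ)
  have hdiff := hprimes.tendsto_sum_nat.sub
    (summable_nonprime_mul_vonMangoldt_div_log_div χ).hasSum.tendsto_sum_nat
  rw [sub_self] at hdiff
  refine hdiff.congr fun N => ?_
  rw [Nat.primesBelow, Finset.sum_filter, ← Finset.sum_sub_distrib, ← Finset.sum_sub_distrib]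
  refine Finset.sum_congr rfl fun n _ => ?_
  by_cases hn : n.Prime
  · have hlog : (log n : ℂ) ≠ 0 := by exact_mod_cast (log_pos (by exact_mod_cast hn.one_lt)).ne'
    simp only [Set.indicator_of_mem (show n ∈ {p : ℕ | p.Prime} from hn), if_pos hn,
      ArithmeticFunction.vonMangoldt_apply_prime hn, mul_div_cancel_right₀ _ hlog]
    ring
  · simp [hn]

theorem LSeriesSummable_mul_vonMangoldt_div_log {s : ℂ} (hs : 1 < s.re) :
    LSeriesSummable (fun n => χ n * Λ n / log n) s := by
  refine LSeriesSummable_of_bounded_of_one_lt_re (m := 1) (fun n _ => ?_) hs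
  rw [norm_div, norm_mul, Complex.norm_of_nonneg ArithmeticFunction.vonMangoldt_nonneg,
    Complex.norm_of_nonneg (log_natCast_nonneg n)]
  refine div_le_one_of_le₀ ?_ (log_natCast_nonneg n)
  exact (mul_le_of_le_one_left ArithmeticFunction.vonMangoldt_nonneg (χ.norm_le_one _)).trans
    ArithmeticFunction.vonMangoldt_le_log

theorem exp_LSeries_mul_vonMangoldt_div_log_div (κ : ℕ) {δ : ℝ} (hδ : 0 < δ) :
    Complex.exp (LSeries (fun n => χ n * Λ n / log n / n) δ + κ * log δ) =
      δ ^ κ * LSeries (fun n => χ n) (1 + δ) := by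
  have hre : 1 < (1 + δ : ℂ).re := by simpa using hδ
  rw [Complex.exp_add, LSeries, LSeries_term_div_natCast, ← LSeries,
    DirichletCharacter.LSeries_eq_exp_LSeries χ hre, Complex.exp_nat_mul, ← Complex.ofReal_exp,
    exp_log hδ, mul_comm]

theorem prod_one_sub_eq_exp_neg_sum (N : ℕ) :
    ∏ p ∈ N.primesBelow, (1 - χ p / p) =
      Complex.exp (-∑ p ∈ N.primesBelow, -Complex.log (1 - χ p / p)) := by
  rw [Finset.sum_neg_distrib, neg_neg, Complex.exp_sum]
  refine Finset.prod_congr rfl fun p hp => (Complex.exp_log (sub_ne_zero.2 fun h => ?_)).symm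
  have hlt := norm_apply_div_natCast_lt_one χ (Nat.prime_of_mem_primesBelow hp).one_lt
  rw [← h, norm_one] at hlt
  exact lt_irrefl _ hlt

variable {χ}

theorem tendsto_prod_one_sub_mul_log_pow {κ : ℕ} {ℓ : ℂ} {b : ℝ}
    (hb : ∀ N : ℕ, ‖∑ n ∈ Finset.range N, χ n * Λ n / n - κ * log N‖ ≤ b)
    (hℓ : Tendsto (fun δ : ℝ => δ ^ κ * LSeries (fun n => χ n) (1 + δ)) (𝓝[>] 0) (𝓝 ℓ)) :
    Tendsto (fun N : ℕ => (∏ p ∈ N.primesBelow, (1 - χ p / p)) * (log N) ^ κ) atTop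
      (𝓝 (ℓ⁻¹ * Complex.exp (-(κ * eulerMascheroniConstant)))) := by
  obtain ⟨C, hC⟩ := exists_tendsto_sum_div_log hb
  simp only [div_right_comm _ _ (log _ : ℂ)] at hC
  have hsummable (δ : ℝ) (hδ : 0 < δ) : LSeriesSummable (fun n => χ n * Λ n / log n / n) δ := by
    rw [LSeriesSummable, LSeries_term_div_natCast]
    exact LSeriesSummable_mul_vonMangoldt_div_log χ (by simpa using hδ)
  have hexp : ℓ = Complex.exp (C - κ * eulerMascheroniConstant) := by
    refine tendsto_nhds_unique hℓ (((Complex.continuous_exp.tendsto _).comp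
      (tendsto_LSeries_add_mul_log (by simp) hsummable hC)).congr' ?_)
    filter_upwards [self_mem_nhdsWithin] with δ hδ
    exact exp_LSeries_mul_vonMangoldt_div_log_div χ κ hδ
  have hlimit : ℓ⁻¹ * Complex.exp (-(κ * eulerMascheroniConstant)) = Complex.exp (-(0 + C)) := by
    rw [hexp, ← Complex.exp_neg, ← Complex.exp_add]
    congr 1
    ring
  rw [hlimit]
  refine ((Complex.continuous_exp.tendsto _).comp
    ((tendsto_sum_neg_log_one_sub_sub_sum χ).add hC).neg).congr' ?_
  filter_upwards [eventually_gt_atTop 1] with N hN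
  have hlog : 0 < log N := log_pos (by exact_mod_cast hN)
  have hpow : (log N : ℂ) ^ κ = Complex.exp (κ * log (log N)) := by
    rw [Complex.exp_nat_mul, ← Complex.ofReal_exp, exp_log hlog]
  rw [prod_one_sub_eq_exp_neg_sum, hpow, ← Complex.exp_add, Function.comp_apply]
  congr 1
  ring

theorem tendsto_prod_one_sub_one_div_mul_log :
    Tendsto (fun N : ℕ => (∏ p ∈ N.primesBelow, (1 - 1 / p : ℝ)) * log N) atTop
      (𝓝 (exp (-eulerMascheroniConstant))) := by
  have hone (n : ℕ) : (1 : DirichletCharacter ℂ 1) n = 1 :=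
    MulChar.one_apply (isUnit_of_subsingleton _)
  obtain ⟨b, hb⟩ := exists_norm_sum_vonMangoldt_div_sub_log_le
  have hbound (N : ℕ) : ‖∑ n ∈ Finset.range N, (1 : DirichletCharacter ℂ 1) n * Λ n / n
      - (1 : ℕ) * log N‖ ≤ b := by
    simpa only [hone, one_mul, Nat.cast_one, ← Complex.norm_real, Complex.ofReal_sub,
      Complex.ofReal_sum, Complex.ofReal_div, Complex.ofReal_natCast] using hb N
  have hto : Tendsto (fun δ : ℝ => (1 + δ : ℂ)) (𝓝[>] 0) (𝓝[≠] 1) := by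
    refine tendsto_nhdsWithin_iff.2 ⟨?_, ?_⟩
    · have hcont : Continuous fun δ : ℝ => (1 + δ : ℂ) := by fun_prop
      simpa using (hcont.tendsto 0).mono_left nhdsWithin_le_nhds
    · filter_upwards [self_mem_nhdsWithin] with δ hδ
      simpa using (Set.mem_Ioi.1 hδ).ne'
  have hresidue : Tendsto (fun δ : ℝ => (δ : ℂ) ^ 1 *
      LSeries (fun n => (1 : DirichletCharacter ℂ 1) n) (1 + δ)) (𝓝[>] 0) (𝓝 1) := by
    refine (riemannZeta_residue_one.comp hto).congr' ?_
    filter_upwards [self_mem_nhdsWithin] with δ hδ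
    rw [← DirichletCharacter.LFunction_eq_LSeries _ (by simpa using hδ),
      DirichletCharacter.LFunction_modOne_eq, Function.comp_apply, add_sub_cancel_left, pow_one]
  have hprod := tendsto_prod_one_sub_mul_log_pow hbound hresidue
  rw [← tendsto_ofReal_iff]
  refine (hprod.congr fun N => ?_).trans_eq ?_
  · simp [hone]
  · simp

variable [NeZero q]

theorem tendsto_prod_one_sub_of_ne_one (hχ : χ ≠ 1) :
    Tendsto (fun N : ℕ => ∏ p ∈ N.primesBelow, (1 - χ p / p)) atTop (𝓝 (χ.LFunction 1)⁻¹) := by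
  obtain ⟨b, hb⟩ := exists_norm_sum_mul_vonMangoldt_div_le hχ
  have hL : Tendsto (fun δ : ℝ => (δ : ℂ) ^ 0 * LSeries (fun n => χ n) (1 + δ)) (𝓝[>] 0)
      (𝓝 (χ.LFunction 1)) := by
    refine (tendsto_LFunction_one_add hχ).congr' ?_
    filter_upwards [self_mem_nhdsWithin] with δ hδ
    rw [χ.LFunction_eq_LSeries (by simpa using hδ), pow_zero, one_mul]
  simpa using tendsto_prod_one_sub_mul_log_pow (κ := 0) (b := b) (by simpa using hb) hL

theorem tendsto_prod_one_sub_div_pow {m : ℕ} (hm : m ≠ 0) (hχ : m = 1 → χ ≠ 1) :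
    Tendsto (fun N : ℕ => ∏ p ∈ N.primesBelow, (1 - χ p / p ^ m)) atTop
      (𝓝 (χ.LFunction m)⁻¹) := by
  rcases (Nat.one_le_iff_ne_zero.2 hm).eq_or_lt with rfl | hm1
  · simpa using tendsto_prod_one_sub_of_ne_one (hχ rfl)
  have hre : 1 < (m : ℂ).re := by simpa using hm1
  have heuler := (DirichletCharacter.LSeries_eulerProduct χ hre).inv₀
    (DirichletCharacter.LSeries_ne_zero_of_one_lt_re χ hre)
  rw [← DirichletCharacter.LFunction_eq_LSeries _ hre] at heuler
  refine heuler.congr fun N => ?_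
  simp only [← Finset.prod_inv_distrib, inv_inv, Complex.cpow_neg, Complex.cpow_natCast,
    div_eq_mul_inv]

end MertensProducts

section MinimalOrder

open Topology

theorem liminf_eq_of_tendsto_of_tendsto_comp {α β ι : Type*} [ConditionallyCompleteLinearOrder β]
    [TopologicalSpace β] [OrderTopology β] {l : Filter α} [NeBot l] {l' : Filter ι} [NeBot l']
    {f F : α → β} {G : ι → β} {u : ι → α} {c : β} (hF : Tendsto F l (𝓝 c)) (hFf : F ≤ᶠ[l] f)
    (hu : Tendsto u l' l) (hG : Tendsto G l' (𝓝 c)) (hfG : f ∘ u ≤ᶠ[l'] G) :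
    liminf f l = c := by
  have hbdd : l.IsBoundedUnder (· ≥ ·) f := hF.isBoundedUnder_ge.mono_ge hFf
  have hbddComp : l'.IsBoundedUnder (· ≥ ·) (f ∘ u) :=
    IsBounded.mono (map_map.symm.trans_le (map_mono hu)) hbdd
  have hcobddComp : l'.IsCoboundedUnder (· ≥ ·) (f ∘ u) :=
    (hG.isBoundedUnder_le.mono_le hfG).isCoboundedUnder_ge
  have hcobdd : l.IsCoboundedUnder (· ≥ ·) f :=
    IsCobounded.mono (map_map.symm.trans_le (map_mono hu)) hcobddComp
  refine le_antisymm ?_ ?_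
  · calc liminf f l ≤ liminf (f ∘ u) l' := hu.liminf_le_liminf_comp hcobddComp hbdd
      _ ≤ liminf G l' := liminf_le_liminf hfG hbddComp hG.isCoboundedUnder_ge
      _ = c := hG.liminf_eq
  · calc c = liminf F l := hF.liminf_eq.symm
      _ ≤ liminf f l := liminf_le_liminf hFf hF.isBoundedUnder_ge hcobdd

theorem tendsto_mul_log_add_const {P : ℕ → ℝ} {c : ℝ}
    (hP : Tendsto (fun N : ℕ => P N * log N) atTop (𝓝 c)) (K : ℝ) :
    Tendsto (fun N : ℕ => P N * (log N + K)) atTop (𝓝 c) := by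
  have hlog : Tendsto (fun N : ℕ => log N) atTop atTop :=
    tendsto_log_atTop.comp tendsto_natCast_atTop_atTop
  have hfactor : Tendsto (fun N : ℕ => 1 + K / log N) atTop (𝓝 1) := by
    simpa using (tendsto_const_nhds.div_atTop hlog).const_add (1 : ℝ)
  have hmul := hP.mul hfactor
  rw [mul_one] at hmul
  refine hmul.congr' ?_
  filter_upwards [hlog.eventually_ne_atTop 0] with N hN
  field_simp

theorem card_primeFactors_ge_mul_log_le (n : ℕ) {N : ℕ} (hN : N ≠ 0) :
    ((n.primeFactors.filter (N ≤ ·)).card : ℝ) * log N ≤ log n := by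
  rcases eq_or_ne n 0 with rfl | hn
  · simp
  have hpow : N ^ (n.primeFactors.filter (N ≤ ·)).card ≤ n :=
    calc N ^ (n.primeFactors.filter (N ≤ ·)).card
      _ ≤ ∏ p ∈ n.primeFactors.filter (N ≤ ·), p :=
          Finset.pow_card_le_prod _ _ _ fun p hp => (Finset.mem_filter.1 hp).2
      _ ≤ n := Nat.le_of_dvd (Nat.pos_of_ne_zero hn) <|
          (Finset.prod_dvd_prod_of_subset _ _ _ (Finset.filter_subset _ _)).trans
            (Nat.prod_primeFactors_dvd n)
  rw [← log_pow]
  exact log_le_log (by positivity) (by exact_mod_cast hpow)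

variable {g : ℕ → ℝ} {A : ℕ}

theorem nonneg_of_one_sub_pow_le (hlow : ∀ p : ℕ, p.Prime → (1 - 1 / p : ℝ) ^ A ≤ g p) {p : ℕ}
    (hp : p.Prime) : 0 ≤ g p :=
  (pow_nonneg (Nat.one_sub_one_div_cast_nonneg p) A).trans (hlow p hp)

theorem one_sub_le_prod_primeFactors_ge (hlow : ∀ p : ℕ, p.Prime → (1 - 1 / p : ℝ) ^ A ≤ g p)
    (n : ℕ) {N : ℕ} (hN : 2 ≤ N) :
    1 - A * (log n / N / log N) ≤ ∏ p ∈ n.primeFactors.filter (N ≤ ·), g p := by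
  set S := n.primeFactors.filter (N ≤ ·)
  have hlog : 0 < log N := log_pos (by exact_mod_cast hN)
  have : (0 : ℝ) < N := by positivity
  have hcard : (S.card : ℝ) ≤ log n / log N :=
    (le_div_iff₀ hlog).2 (card_primeFactors_ge_mul_log_le n (by omega))
  have hinv : 0 ≤ 1 - 1 / (N : ℝ) := Nat.one_sub_one_div_cast_nonneg N
  calc 1 - A * (log n / N / log N) = 1 - A * (log n / log N) * (1 / N) := by ring
    _ ≤ 1 - A * S.card * (1 / N) := by gcongr
    _ = 1 + ((A * S.card : ℕ) : ℝ) * -(1 / N) := by push_cast; ring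
    _ ≤ (1 + -(1 / N : ℝ)) ^ (A * S.card) := one_add_mul_le_pow (by linarith) _
    _ = ∏ _ ∈ S, (1 - 1 / N : ℝ) ^ A := by rw [Finset.prod_const, ← pow_mul, sub_eq_add_neg]
    _ ≤ ∏ p ∈ S, g p := by
      refine Finset.prod_le_prod (fun _ _ => pow_nonneg hinv A) fun p hp => ?_
      obtain ⟨hpn, hNp⟩ := Finset.mem_filter.1 hp
      refine le_trans ?_ (hlow p (Nat.prime_of_mem_primeFactors hpn))
      have hle : (1 : ℝ) / p ≤ 1 / N := by gcongr
      exact pow_le_pow_left₀ hinv (by linarith) A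

theorem prod_primesBelow_le_prod_primeFactors_lt (hpos : ∀ p : ℕ, p.Prime → 0 ≤ g p)
    (hle : ∀ p : ℕ, p.Prime → g p ≤ 1) (n N : ℕ) :
    ∏ p ∈ N.primesBelow, g p ≤ ∏ p ∈ n.primeFactors.filter (¬N ≤ ·), g p := by
  refine Finset.prod_le_prod_of_subset_of_le_one (fun p hp => ?_)
    (fun p hp => hpos p (Nat.prime_of_mem_primesBelow hp))
    (fun p hp _ => hle p (Nat.prime_of_mem_primesBelow hp))
  obtain ⟨hpn, hpN⟩ := Finset.mem_filter.1 hp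
  exact Nat.mem_primesBelow.2 ⟨not_le.1 hpN, Nat.prime_of_mem_primeFactors hpn⟩

theorem prod_primesBelow_mul_le_prod_primeFactors
    (hlow : ∀ p : ℕ, p.Prime → (1 - 1 / p : ℝ) ^ A ≤ g p) (hle : ∀ p : ℕ, p.Prime → g p ≤ 1)
    (n : ℕ) {N : ℕ} (hN : 2 ≤ N) :
    (∏ p ∈ N.primesBelow, g p) * (1 - A * (log n / N / log N)) ≤ ∏ p ∈ n.primeFactors, g p := by
  have hpos (p : ℕ) (hp : p.Prime) : 0 ≤ g p := nonneg_of_one_sub_pow_le hlow hp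
  rw [← Finset.prod_filter_mul_prod_filter_not n.primeFactors (N ≤ ·), mul_comm]
  refine mul_le_mul (one_sub_le_prod_primeFactors_ge hlow n hN)
    (prod_primesBelow_le_prod_primeFactors_lt hpos hle n N) ?_ ?_
  · exact Finset.prod_nonneg fun p hp => hpos p (Nat.prime_of_mem_primesBelow hp)
  · exact Finset.prod_nonneg fun p hp =>
      hpos p (Nat.prime_of_mem_primeFactors (Finset.mem_filter.1 hp).1)

theorem log_log_primorial_le {N : ℕ} (hN : 2 ≤ N) :
    log (log (primorial N)) ≤ log (N + 1 : ℕ) + log (log 4) := by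
  have hlog4 : 0 < log 4 := log_pos (by norm_num)
  have hone : (1 : ℝ) < primorial N := by exact_mod_cast hN.trans le_primorial_self
  rw [← log_mul (by positivity) hlog4.ne']
  refine log_le_log (log_pos hone) ?_
  calc log (primorial N) ≤ log (4 ^ N) :=
        log_le_log (one_pos.trans hone) (by exact_mod_cast primorial_le_four_pow N)
    _ = N * log 4 := by rw [log_pow]
    _ ≤ (N + 1 : ℕ) * log 4 := by gcongr; exact N.le_succ

theorem liminf_prod_primeFactors_mul_log_log {c : ℝ}
    (hlow : ∀ p : ℕ, p.Prime → (1 - 1 / p : ℝ) ^ A ≤ g p) (hle : ∀ p : ℕ, p.Prime → g p ≤ 1)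
    (hc : Tendsto (fun N : ℕ => (∏ p ∈ N.primesBelow, g p) * log N) atTop (𝓝 c)) :
    liminf (fun n : ℕ => (∏ p ∈ n.primeFactors, g p) * log (log n)) atTop = c := by
  have hpos (p : ℕ) (hp : p.Prime) : 0 ≤ g p := nonneg_of_one_sub_pow_le hlow hp
  have hlog : Tendsto (fun n : ℕ => log n) atTop atTop :=
    tendsto_log_atTop.comp tendsto_natCast_atTop_atTop
  have hfloor : Tendsto (fun n : ℕ => ⌊log n⌋₊) atTop atTop := tendsto_nat_floor_atTop.comp hlog
  have herror : Tendsto (fun n : ℕ => 1 - A * (log n / ⌊log n⌋₊ / log ⌊log n⌋₊)) atTop (𝓝 1) := by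
    have hratio : Tendsto (fun n : ℕ => log n / ⌊log n⌋₊) atTop (𝓝 1) := by
      simpa using (tendsto_nat_floor_div_atTop.comp hlog).inv₀ one_ne_zero
    simpa using ((hratio.div_atTop (hlog.comp hfloor)).const_mul (A : ℝ)).const_sub 1
  have hlower := (hc.comp hfloor).mul herror
  rw [mul_one] at hlower
  have hupper := (tendsto_mul_log_add_const hc (log (log 4))).comp (tendsto_add_atTop_nat 1)
  refine liminf_eq_of_tendsto_of_tendsto_comp hlower ?_
    (tendsto_atTop_mono (fun N => le_primorial_self) tendsto_id) hupper ?_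
  · filter_upwards [hfloor.eventually_ge_atTop 2] with n hn
    have hloglog : log ⌊log n⌋₊ ≤ log (log n) :=
      log_le_log (by positivity) (Nat.floor_le (log_natCast_nonneg n))
    rw [Function.comp_apply, mul_right_comm]
    exact mul_le_mul (prod_primesBelow_mul_le_prod_primeFactors hlow hle n hn) hloglog
      (log_natCast_nonneg _)
      (Finset.prod_nonneg fun p hp => hpos p (Nat.prime_of_mem_primeFactors hp))
  · filter_upwards [eventually_ge_atTop 2] with N hN
    rw [Function.comp_apply, Function.comp_apply, primeFactors_primorial]
    exact mul_le_mul_of_nonneg_left (log_log_primorial_le hN)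
      (Finset.prod_nonneg fun p hp => hpos p (Nat.prime_of_mem_primesBelow hp))

end MinimalOrder

section TotientDensity

open Topology

theorem exists_ofReal_eq_and_tendsto_of_tendsto_ofReal {α : Type*} {l : Filter α} [NeBot l]
    {f : α → ℝ} {z : ℂ} (hf : Tendsto (fun x => (f x : ℂ)) l (𝓝 z)) :
    ∃ c : ℝ, (c : ℂ) = z ∧ Tendsto f l (𝓝 c) := by
  obtain ⟨c, rfl⟩ := Complex.isometry_ofReal.isClosedEmbedding.isClosed_range.mem_of_tendsto hf
    (Eventually.of_forall fun x => Set.mem_range_self (f x))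
  exact ⟨c, rfl, tendsto_ofReal_iff.1 hf⟩

theorem chiOne_ne_one : chiOne ≠ 1 := by
  intro h
  have h3 : chiOne 3 = 1 := h ▸ MulChar.one_apply (by decide)
  rw [chiOne, MulChar.ringHomComp_apply, show ZMod.χ₄ 3 = -1 by decide] at h3
  norm_num at h3

theorem chiOne_pow_apply_div {m : ℕ} (hm : m ≠ 0) (p : ℕ) :
    (chiOne ^ m) p / (p : ℂ) ^ m = (((ZMod.χ₄ p / p : ℝ) ^ m : ℝ) : ℂ) := by
  simp [chiOne, MulChar.pow_apply' _ hm, div_pow]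

theorem chiOne_pow_of_odd {m : ℕ} (hm : Odd m) : chiOne ^ m = chiOne :=
  (ZMod.isQuadratic_χ₄.comp _).pow_odd hm

theorem abs_chi_four_div_pow_le {m : ℕ} (hm : m ≠ 0) (p : ℕ) :
    |(ZMod.χ₄ p / p : ℝ) ^ m| ≤ 1 / p := by
  have hχ : |(ZMod.χ₄ p : ℝ)| ≤ 1 := by
    exact_mod_cast (by decide : ∀ a : ZMod 4, |ZMod.χ₄ a| ≤ 1) p
  have hle : |(ZMod.χ₄ p / p : ℝ)| ≤ 1 / p := by
    rw [abs_div, Nat.abs_cast]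
    gcongr
  have hone : (1 / p : ℝ) ≤ 1 := sub_nonneg.1 (Nat.one_sub_one_div_cast_nonneg p)
  rw [abs_pow]
  exact (pow_le_of_le_one (abs_nonneg _) (hle.trans hone) hm).trans hle

theorem genTotient_prime_div_pow_mem_Icc {m : ℕ} (hm : m ≠ 0) {p : ℕ} (hp : p.Prime) :
    (genTotient (2 * m) p : ℝ) / (p : ℝ) ^ (2 * m) ∈ Set.Icc ((1 - 1 / p : ℝ) ^ 2) 1 := by
  have hone : (0 : ℝ) ≤ 1 - 1 / p := Nat.one_sub_one_div_cast_nonneg p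
  obtain ⟨hlower, hupper⟩ := abs_le.1 (abs_chi_four_div_pow_le hm p)
  rw [genTotient_prime_div_pow m hp]
  constructor
  · rw [sq]
    gcongr
  · calc (1 - 1 / p : ℝ) * (1 - (ZMod.χ₄ p / p : ℝ) ^ m)
      _ ≤ (1 - 1 / p) * (1 + 1 / p) := by gcongr; linarith
      _ = 1 - (1 / p) ^ 2 := by ring
      _ ≤ 1 := sub_le_self _ (sq_nonneg _)

theorem tendsto_prod_genTotient_div_pow_mul_log {m : ℕ} (hm : m ≠ 0) :
    Tendsto (fun N : ℕ => (((∏ p ∈ N.primesBelow, (genTotient (2 * m) p : ℝ) / (p : ℝ) ^ (2 * m)) *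
      log N : ℝ) : ℂ)) atTop
      (𝓝 ((DirichletCharacter.LFunction (chiOne ^ m) m)⁻¹ * exp (-eulerMascheroniConstant))) := by
  have hχ : m = 1 → chiOne ^ m ≠ 1 := by
    rintro rfl
    simpa only [pow_one] using chiOne_ne_one
  refine ((tendsto_prod_one_sub_div_pow hm hχ).mul
    (tendsto_ofReal_iff.2 tendsto_prod_one_sub_one_div_mul_log)).congr fun N => ?_
  rw [Complex.ofReal_mul, Complex.ofReal_mul, ← mul_assoc, Complex.ofReal_prod,
    Complex.ofReal_prod, ← Finset.prod_mul_distrib]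
  congr 1
  refine Finset.prod_congr rfl fun p hp => ?_
  rw [genTotient_prime_div_pow m (Nat.prime_of_mem_primesBelow hp), chiOne_pow_apply_div hm,
    mul_comm]
  push_cast
  rfl

end TotientDensity

theorem minimal_order_two_mod_four_general {m : ℕ} (hm : m ≠ 0) :
    (↑(Filter.liminf
        (fun n : ℕ => (genTotient (2 * m) n : ℝ) * Real.log (Real.log n) / (n : ℝ) ^ (2 * m))
        Filter.atTop : ℝ) : ℂ) =
      (DirichletCharacter.LFunction (chiOne ^ m) m)⁻¹ *
        (Real.exp (-Real.eulerMascheroniConstant) : ℝ) := by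
  obtain ⟨c, hc, htendsto⟩ := exists_ofReal_eq_and_tendsto_of_tendsto_ofReal
    (tendsto_prod_genTotient_div_pow_mul_log hm)
  rw [← hc, Complex.ofReal_inj, ← liminf_prod_primeFactors_mul_log_log
    (fun p hp => (genTotient_prime_div_pow_mem_Icc hm hp).1)
    (fun p hp => (genTotient_prime_div_pow_mem_Icc hm hp).2) htendsto]
  refine liminf_congr ?_
  filter_upwards [eventually_ne_atTop 0] with n hn
  rw [mul_div_right_comm, genTotient_div_pow_eq_prod _ hn]

/-- Theorem 7 (keven, case `k ≡ 2 mod 4`): the minimal order of `Φ_k(n)` is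
`L(k/2, χ₁)^{-1} e^{-γ} n^k / log log n`. -/
theorem minimal_order_two_mod_four (k : ℕ) (hk : 2 ≤ k) (hmod : k % 4 = 2) :
    (↑(Filter.liminf
        (fun n : ℕ => (genTotient k n : ℝ) * Real.log (Real.log n) / (n : ℝ) ^ k)
        Filter.atTop : ℝ) : ℂ) =
      (DirichletCharacter.LFunction chiOne (k / 2))⁻¹ *
        (Real.exp (-Real.eulerMascheroniConstant) : ℝ) := by
  obtain ⟨m, rfl⟩ : ∃ m, k = 2 * m := ⟨k / 2, by omega⟩
  simpa [chiOne_pow_of_odd (show Odd m by grind)] using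
    minimal_order_two_mod_four_general (m := m) (by omega)
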